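/- The following are equivalent: (1) ω₁ < 𝔟; (2) every K-analytic Hausdorff topological space with a unique non-isolated point in which every compact subset is at most countable is itself at most countable. -/

import Mathlib

open Cardinal Set Topology

universe u

def FunctionallyHausdorff (X : Type u) [TopologicalSpace X] : Prop :=
  ∀ x y : X, x ≠ y → ∃ f : X → unitInterval, Continuous f ∧ f x = 0 ∧ f y = 1

def IsCechComplete (X : Type u) [TopologicalSpace X] : Prop :=
  ∃ (K : Type u) (_ : TopologicalSpace K) (e : X → K),
    CompactSpace K ∧ T2Space K ∧ IsEmbedding e ∧ DenseRange e ∧ IsGδ (Set.range e)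

noncomputable def lindelofNumber (X : Type u) [TopologicalSpace X] : Cardinal.{u} :=
  sInf {κ : Cardinal.{u} | ℵ₀ ≤ κ ∧ ∀ U : Set (Set X), (∀ u ∈ U, IsOpen u) → ⋃₀ U = Set.univ →
    ∃ V ⊆ U, #↥V ≤ κ ∧ ⋃₀ V = Set.univ}

noncomputable def pseudocharacter (X : Type u) [TopologicalSpace X] : Cardinal.{u} :=
  sInf {κ : Cardinal.{u} | ℵ₀ ≤ κ ∧ ∀ x : X, ∃ 𝒰 : Set (Set X),
    #↥𝒰 ≤ κ ∧ (∀ U ∈ 𝒰, IsOpen U ∧ x ∈ U) ∧ ⋂₀ 𝒰 = ⋂₀ {U : Set X | IsOpen U ∧ x ∈ U}}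

def IsScatteredSet {X : Type u} [TopologicalSpace X] (S : Set X) : Prop :=
  ∀ T ⊆ S, T.Nonempty → ∃ x ∈ T, ∃ U : Set X, IsOpen U ∧ U ∩ T = {x}

def IsKAnalytic (X : Type u) [TopologicalSpace X] : Prop :=
  ∃ (P : Type u) (_ : TopologicalSpace P) (f : P → X),
    LindelofSpace P ∧ IsCechComplete P ∧ Continuous f ∧ Function.Surjective f

def IsAnalyticSpace (X : Type u) [TopologicalSpace X] : Prop :=
  ∃ (P : Type u) (_ : TopologicalSpace P), PolishSpace P ∧
    ∃ f : P → X, Continuous f ∧ Function.Surjective f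

noncomputable def boundingNumber : Cardinal.{0} :=
  sInf {κ : Cardinal.{0} | ∃ B : Set (ℕ → ℕ), #↥B = κ ∧
    ∀ y : ℕ → ℕ, ∃ x ∈ B, {n : ℕ | ¬ x n ≤ y n}.Infinite}

open Filter in
theorem IsProperMap.lindelofSpace {Y Z : Type*} [TopologicalSpace Y] [TopologicalSpace Z]
    [LindelofSpace Z] {f : Y → Z} (hf : IsProperMap f) : LindelofSpace Y := by
  refine ⟨fun F hF hc _ => ?_⟩
  obtain ⟨z, hz⟩ := cluster_point_of_Lindelof (map f F)
  obtain ⟨x, -, hx⟩ := hf.clusterPt_of_mapClusterPt hz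
  exact ⟨x, mem_univ x, hx⟩

/-- A subspace of a compact Hausdorff space that is the intersection of a closed set and a
`Gδ` set is Čech-complete. -/
theorem IsCechComplete.of_isEmbedding {P K : Type u} [TopologicalSpace P] [TopologicalSpace K]
    [CompactSpace K] [T2Space K] {e : P → K} (he : IsEmbedding e) {C G : Set K}
    (hC : IsClosed C) (hG : IsGδ G) (h : range e = C ∩ G) : IsCechComplete P := by
  have hmem : ∀ p, e p ∈ closure (range e) := fun p => subset_closure (mem_range_self p)
  refine ⟨closure (range e), inferInstance, codRestrict e _ hmem,
    isCompact_iff_compactSpace.mp isClosed_closure.isCompact, inferInstance,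
    he.codRestrict _ _, ?_, ?_⟩
  · rw [DenseRange, Subtype.dense_iff]
    intro x hx
    rwa [← range_comp]
  · convert hG.preimage (continuous_subtype_val (p := (· ∈ closure (range e)))) using 1
    ext ⟨x, hx⟩
    have hxC : x ∈ C := closure_minimal (h.le.trans inter_subset_left) hC hx
    have : x ∈ range e ↔ x ∈ G := by rw [h]; simp [hxC]
    simp only [mem_preimage, ← this, mem_range, Subtype.ext_iff, val_codRestrict_apply]

/-- A Lindelöf Čech-complete space has a cover by compact sets indexed by `ℕ → ℕ` in a way
that is compatible with the pointwise order. -/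
theorem IsCechComplete.exists_compact_cover {P : Type u} [TopologicalSpace P] [LindelofSpace P]
    (hP : IsCechComplete P) : ∃ C : (ℕ → ℕ) → Set P, (∀ y, IsCompact (C y)) ∧
      ∀ p, ∃ x, ∀ y, x ≤ y → p ∈ C y := by
  obtain ⟨K, _, e, _, _, he, -, hG⟩ := hP
  obtain ⟨U, hUo, hU⟩ := isGδ_iff_eq_iInter_nat.mp hG
  rcases isEmpty_or_nonempty P with hPe | hPn
  · exact ⟨fun _ => ∅, fun _ => isCompact_empty, fun p => hPe.elim p⟩
  have key : ∀ n, ∃ V : ℕ → Set K, (∀ m, IsClosed (V m) ∧ V m ⊆ U n) ∧ ∀ p, ∃ m, e p ∈ V m := by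
    intro n
    have hn : ∀ p, ∃ W : Set K, W ∈ 𝓝 (e p) ∧ IsClosed W ∧ W ⊆ U n := fun p =>
      exists_mem_nhds_isClosed_subset ((hUo n).mem_nhds
        (mem_iInter.mp (hU ▸ mem_range_self p : e p ∈ ⋂ n, U n) n))
    choose W hW using hn
    obtain ⟨t, htc, ht⟩ := LindelofSpace.elim_nhds_subcover (fun p => e ⁻¹' W p)
      fun p => he.continuous.continuousAt (hW p).1
    have htn : t.Nonempty := by
      rw [nonempty_iff_ne_empty]
      rintro rfl
      rw [biUnion_empty] at ht
      exact empty_ne_univ ht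
    obtain ⟨s, rfl⟩ := htc.exists_eq_range htn
    refine ⟨fun m => W (s m), fun m => (hW _).2, fun p => ?_⟩
    have : p ∈ ⋃ x ∈ range s, e ⁻¹' W x := ht ▸ mem_univ p
    simpa using this
  choose V hV hVp using key
  let D : (ℕ → ℕ) → Set K := fun y => ⋂ n, ⋃ m ∈ Iic (y n), V n m
  have hDU : ∀ y, D y ⊆ range e := fun y => by
    rw [hU]
    exact iInter_mono fun n => iUnion₂_subset fun m _ => (hV n m).2
  refine ⟨fun y => e ⁻¹' D y, fun y => ?_, fun p => ?_⟩
  · refine (he.isCompact_preimage_iff (hDU y)).mpr (IsClosed.isCompact ?_)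
    exact isClosed_iInter fun n => (finite_Iic _).isClosed_biUnion fun m _ => (hV n m).1
  · choose x hx using fun n => hVp n p
    exact ⟨x, fun y hxy => mem_iInter.mpr fun n => mem_iUnion₂.mpr ⟨x n, hxy n, hx n⟩⟩

theorem exists_eventually_bound_of_lt {B : Set (ℕ → ℕ)} (hB : #B < boundingNumber) :
    ∃ y : ℕ → ℕ, ∀ x ∈ B, {n : ℕ | ¬ x n ≤ y n}.Finite := by
  by_contra h
  refine hB.not_ge (csInf_le' ⟨B, rfl, fun y => ?_⟩)
  by_contra hy
  exact h ⟨y, fun x hx => not_infinite.mp fun hinf => hy ⟨x, hx, hinf⟩⟩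

theorem countable_of_compact_countable (h : Cardinal.aleph 1 < boundingNumber) {X : Type u}
    [TopologicalSpace X] (hX : IsKAnalytic X) (hc : ∀ K : Set X, IsCompact K → K.Countable) :
    Countable X := by
  obtain ⟨P, _, f, _, hP, hf, hfs⟩ := hX
  obtain ⟨C, hC, hCp⟩ := hP.exists_compact_cover
  choose a ha using hCp
  choose g hg using hfs
  by_contra hX
  have hX1 : Cardinal.aleph 1 ≤ #X := by
    rw [← Cardinal.succ_aleph0, Order.succ_le_iff, ← not_le, Cardinal.mk_le_aleph0_iff]
    exact hX
  obtain ⟨Y, hY⟩ := Cardinal.le_mk_iff_exists_set.mp hX1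
  have hB : #(↥((fun x => a (g x)) '' Y)) ≤ Cardinal.aleph 1 := by
    have := Cardinal.mk_image_le_lift (f := fun x => a (g x)) (s := Y)
    rw [hY] at this
    simpa using this
  obtain ⟨y, hy⟩ := exists_eventually_bound_of_lt (hB.trans_lt h)
  have hsub : Y ⊆ ⋃ k : ℕ, f '' C (fun n => y n + k) := by
    intro x hx
    obtain ⟨k, hk⟩ := ((hy _ (mem_image_of_mem _ hx)).image (a (g x))).bddAbove
    refine mem_iUnion.mpr ⟨k, g x, ha _ _ fun n => ?_, hg x⟩
    by_cases hn : a (g x) n ≤ y n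
    · exact hn.trans (Nat.le_add_right _ _)
    · exact (hk (mem_image_of_mem _ hn)).trans (Nat.le_add_left _ _)
  have hYc : Y.Countable :=
    (countable_iUnion fun k => hc _ ((hC _).image hf)).mono hsub
  rw [← Cardinal.le_aleph0_iff_set_countable, hY] at hYc
  exact hYc.not_gt Cardinal.aleph0_lt_aleph_one

theorem exists_eventually_bound_of_countable {ι : Type*} {B : Set ι} (hB : B.Countable)
    (b : ι → ℕ → ℕ) :
    ∃ y : ℕ → ℕ, ∀ i ∈ B, {n : ℕ | ¬ b i n ≤ y n}.Finite := by
  rcases B.eq_empty_or_nonempty with rfl | hne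
  · exact ⟨0, by simp⟩
  obtain ⟨s, rfl⟩ := hB.exists_eq_range hne
  refine ⟨fun n => ∑ k ∈ Finset.range (n + 1), b (s k) n, ?_⟩
  rintro _ ⟨k, rfl⟩
  refine (finite_lt_nat k).subset fun n hn => ?_
  by_contra hkn
  refine hn (Finset.single_le_sum (f := fun k => b (s k) n) (fun _ _ => Nat.zero_le _) ?_)
  rw [mem_ofPred_eq] at hkn
  simp only [Finset.mem_range]
  omega

/-- If `𝔟 ≤ ℵ₁`, there is an uncountable family in `ℕ → ℕ` all of whose bounded subfamilies
are countable. -/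
theorem exists_family_of_boundingNumber_le (h : boundingNumber ≤ Cardinal.aleph 1) :
    ∃ (I : Type) (b : I → ℕ → ℕ), Uncountable I ∧ ∀ y, {i | b i ≤ y}.Countable := by
  obtain ⟨B, hBc, hB⟩ : ∃ B : Set (ℕ → ℕ), #↥B = boundingNumber ∧
      ∀ y : ℕ → ℕ, ∃ x ∈ B, {n : ℕ | ¬ x n ≤ y n}.Infinite := by
    refine csInf_mem (s := {κ : Cardinal.{0} | ∃ B : Set (ℕ → ℕ), #↥B = κ ∧
      ∀ y : ℕ → ℕ, ∃ x ∈ B, {n : ℕ | ¬ x n ≤ y n}.Infinite}) ⟨_, univ, rfl, fun y => ?_⟩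
    exact ⟨fun n => y n + 1, mem_univ _, by simpa using infinite_univ⟩
  let I := (Cardinal.aleph.{0} 1).ord.ToType
  have hI : #I = Cardinal.aleph 1 := Cardinal.mk_ord_toType _
  have hBne : Nonempty B := let ⟨x, hx, _⟩ := hB 0; ⟨⟨x, hx⟩⟩
  obtain ⟨⟨j, hj⟩⟩ : #B ≤ #I := by rw [hBc, hI]; exact h
  let s : I → B := Function.invFun j
  have hs : Function.Surjective s := Function.invFun_surjective hj
  have hIic : ∀ i : I, (Iic i).Countable := fun i => by
    have : (Iio i).Countable := by
      rw [← Cardinal.le_aleph0_iff_set_countable, ← Order.lt_succ_iff, Cardinal.succ_aleph0]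
      exact (Cardinal.mk_Iio_lt i (by simp [I])).trans_eq hI
    rw [← Iio_insert]
    exact this.insert i
  choose b hb using fun i => exists_eventually_bound_of_countable (hIic i) fun k => (s k : ℕ → ℕ)
  refine ⟨I, b, ?_, fun y => ?_⟩
  · rw [← Cardinal.aleph0_lt_mk_iff, hI]
    exact Cardinal.aleph0_lt_aleph_one
  · by_contra hy
    obtain ⟨x, hx, hxy⟩ := hB y
    obtain ⟨k, hk⟩ := hs ⟨x, hx⟩
    obtain ⟨i, hi, hki⟩ : ∃ i ∈ {i | b i ≤ y}, k ≤ i := by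
      by_contra! hlt
      exact hy ((hIic k).mono fun i hi => (hlt i hi).le)
    refine hxy ((hb i k hki).subset fun n hn hle => hn ?_)
    rw [hk] at hle
    exact hle.trans (hi n)

section Construction

variable {I : Type} (b : I → ℕ → ℕ)

/-- The Alexandroff duplicate of `ℕ → ℕ` in which only the points `b i` are doubled: the point
`(β, ∞)` is the original `β`, and `(b i, i)` is an isolated double of `b i`. -/
def Duplicate : Type := {p : (ℕ → ℕ) × OnePoint I // ∀ i : I, p.2 = i → p.1 = b i}

/-- The quotient of `Duplicate b` obtained by collapsing all the original points to `∞`. -/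
def DuplicateQuotient (_ : I → ℕ → ℕ) : Type := OnePoint I

/-- The quotient map. -/
def Duplicate.proj (p : Duplicate b) : DuplicateQuotient b := p.1.2

theorem Duplicate.surjective_proj : Function.Surjective (Duplicate.proj b) := by
  intro x
  induction x using OnePoint.rec with
  | infty => exact ⟨⟨(0, OnePoint.infty), fun i hi => (OnePoint.infty_ne_coe i hi).elim⟩, rfl⟩
  | coe i => exact ⟨⟨(b i, i), fun k hk => by rw [OnePoint.coe_eq_coe.mp hk]⟩, rfl⟩

variable [TopologicalSpace I]

instance : TopologicalSpace (Duplicate b) := instTopologicalSpaceSubtype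

instance : TopologicalSpace (DuplicateQuotient b) :=
  TopologicalSpace.coinduced (Duplicate.proj b) inferInstance

theorem Duplicate.continuous_proj : Continuous (Duplicate.proj b) := continuous_coinduced_rng

/-- The identity, from the quotient topology to that of the one-point compactification. -/
def DuplicateQuotient.toOnePoint (x : DuplicateQuotient b) : OnePoint I := x

theorem DuplicateQuotient.continuous_toOnePoint :
    Continuous (DuplicateQuotient.toOnePoint b) :=
  continuous_coinduced_dom.mpr (continuous_snd.comp continuous_subtype_val)

variable [DiscreteTopology I]

instance : T2Space (DuplicateQuotient b) :=
  T2Space.of_injective_continuous (f := DuplicateQuotient.toOnePoint b) (fun _ _ h => h)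
    (DuplicateQuotient.continuous_toOnePoint b)

theorem isClosed_setOf_duplicate {Z : Type*} [TopologicalSpace Z] [T1Space Z] (c : I → Z) :
    IsClosed {p : Z × OnePoint I | ∀ i : I, p.2 = i → p.1 = c i} := by
  rw [ofPred_forall]
  refine isClosed_iInter fun i => ?_
  have : {p : Z × OnePoint I | p.2 = i → p.1 = c i} =
      (Prod.snd ⁻¹' ({(i : OnePoint I)} : Set (OnePoint I)))ᶜ ∪ Prod.fst ⁻¹' {c i} := by
    ext p
    simp [imp_iff_not_or]
  rw [this]
  refine IsClosed.union (IsOpen.isClosed_compl ?_) (isClosed_singleton.preimage continuous_fst)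
  refine IsOpen.preimage continuous_snd ?_
  rw [← image_singleton]
  exact OnePoint.isOpenMap_coe _ (isOpen_discrete _)

instance : LindelofSpace (Duplicate b) := by
  have h1 : IsProperMap (Subtype.val : Duplicate b → (ℕ → ℕ) × OnePoint I) :=
    (isClosed_setOf_duplicate b).isClosedEmbedding_subtypeVal.isProperMap
  exact (isProperMap_fst_of_compactSpace.comp h1).lindelofSpace

theorem isCechComplete_duplicate : IsCechComplete (ULift.{u} (Duplicate b)) := by
  let q : (ℕ → ℕ) → ℕ → OnePoint ℕ := Pi.map fun _ => OnePoint.some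
  have hq : IsEmbedding q := .piMap fun _ => OnePoint.isOpenEmbedding_coe.isEmbedding
  let e : ULift.{u} (Duplicate b) → ULift.{u} ((ℕ → OnePoint ℕ) × OnePoint I) :=
    fun p => ⟨Prod.map q id p.down.1⟩
  have he : IsEmbedding e :=
    Homeomorph.ulift.symm.isEmbedding.comp <| (hq.prodMap .id).comp <|
      IsEmbedding.subtypeVal.comp Homeomorph.ulift.isEmbedding
  refine .of_isEmbedding he
    (C := ULift.down ⁻¹' {p | ∀ i : I, p.2 = i → p.1 = q (b i)})
    (G := ⋂ n : ℕ, {p | p.down.1 n ≠ OnePoint.infty})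
    ((isClosed_setOf_duplicate _).preimage continuous_uliftDown)
    (.iInter_of_isOpen fun n => ?_) ?_
  · refine isOpen_compl_singleton.preimage (t := {OnePoint.infty}ᶜ)
      (f := fun p : ULift.{u} ((ℕ → OnePoint ℕ) × OnePoint I) => p.down.1 n) ?_
    exact (continuous_apply n).comp (continuous_fst.comp continuous_uliftDown)
  · ext ⟨x, z⟩
    constructor
    · rintro ⟨⟨⟨⟨β, w⟩, hp⟩⟩, hpe⟩
      obtain ⟨rfl, rfl⟩ := Prod.ext_iff.mp (congrArg ULift.down hpe)
      refine ⟨fun i hi => congrArg q (hp i hi), mem_iInter.mpr fun n => ?_⟩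
      exact OnePoint.coe_ne_infty _
    · rintro ⟨hC, hG⟩
      have hG' : ∀ n, ∃ m : ℕ, (m : OnePoint ℕ) = x n := fun n =>
        OnePoint.ne_infty_iff_exists.mp (mem_iInter.mp hG n)
      choose β hβ using hG'
      have hβx : q β = x := funext hβ
      refine ⟨⟨⟨(β, z), fun i hi => hq.injective ?_⟩⟩, ?_⟩
      · exact hβx.trans (hC i hi)
      · exact congrArg ULift.up (Prod.ext hβx rfl)

theorem isKAnalytic_duplicateQuotient : IsKAnalytic (ULift.{u} (DuplicateQuotient b)) := by
  refine ⟨ULift.{u} (Duplicate b), inferInstance, ULift.map (Duplicate.proj b), ?_,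
    isCechComplete_duplicate b, ?_, ?_⟩
  · exact Homeomorph.ulift.isClosedEmbedding.LindelofSpace
  · exact continuous_uliftUp.comp ((Duplicate.continuous_proj b).comp continuous_uliftDown)
  · exact ULift.map_surjective.mpr (Duplicate.surjective_proj b)

theorem isOpen_singleton_coe_duplicateQuotient (i : I) :
    IsOpen ({(i : OnePoint I)} : Set (DuplicateQuotient b)) := by
  have : IsOpen ({(i : OnePoint I)} : Set (OnePoint I)) := by
    rw [← image_singleton]
    exact OnePoint.isOpenMap_coe _ (isOpen_discrete _)
  exact this.preimage (DuplicateQuotient.continuous_toOnePoint b)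

theorem not_isOpen_singleton_infty_duplicateQuotient [Uncountable I] :
    ¬ IsOpen ({OnePoint.infty} : Set (DuplicateQuotient b)) := by
  intro h
  have hd : DiscreteTopology (DuplicateQuotient b) := by
    refine discreteTopology_iff_isOpen_singleton.mpr fun x => ?_
    induction x using OnePoint.rec with
    | infty => exact h
    | coe i => exact isOpen_singleton_coe_duplicateQuotient b i
  have : LindelofSpace (DuplicateQuotient b) :=
    .of_continuous_surjective (Duplicate.continuous_proj b) (Duplicate.surjective_proj b)
  have hc : Countable (DuplicateQuotient b) := countable_of_Lindelof_of_discrete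
  have hI : Function.Injective fun i : I => ((i : OnePoint I) : DuplicateQuotient b) :=
    OnePoint.coe_injective
  exact not_countable (hI.countable (β := DuplicateQuotient b))

instance : T2Space (Duplicate b) :=
  inferInstanceAs (T2Space {p : (ℕ → ℕ) × OnePoint I // ∀ i : I, p.2 = i → p.1 = b i})

theorem isClosed_image_of_injOn {S : Set I} {n : ℕ} (hS : InjOn (fun i => b i n) S) :
    IsClosed ((fun i : I => (i : OnePoint I)) '' S : Set (DuplicateQuotient b)) := by
  refine isClosed_coinduced.mpr ?_
  have hn : Continuous fun p : Duplicate b => p.1.1 n :=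
    (continuous_apply n).comp (continuous_fst.comp continuous_subtype_val)
  have heq : Duplicate.proj b ⁻¹' ((fun i : I => (i : OnePoint I)) '' S) =
      ⋃ m : ℕ, {p | p.1.1 n = m ∧
        p ∈ Duplicate.proj b ⁻¹' ((fun i : I => (i : OnePoint I)) '' S)} := by
    ext p
    simp
  rw [heq]
  refine LocallyFinite.isClosed_iUnion ?_ fun m => Set.Subsingleton.isClosed ?_
  · intro p
    refine ⟨{p' | p'.1.1 n = p.1.1 n}, ?_, ?_⟩
    · exact ((isOpen_discrete {p.1.1 n}).preimage hn).mem_nhds rfl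
    · refine (finite_singleton (p.1.1 n)).subset ?_
      rintro m ⟨p', ⟨h1, -⟩, h2⟩
      exact h1.symm.trans h2
  · rintro ⟨⟨β, z⟩, hp⟩ ⟨h1, i, hi, hiz⟩ ⟨⟨γ, w⟩, hp'⟩ ⟨h2, j, hj, hjw⟩
    have e1 : β = b i := hp i hiz.symm
    have e2 : γ = b j := hp' j hjw.symm
    have hij : i = j := hS hi hj (by simp only [← e1, ← e2]; exact h1.trans h2.symm)
    refine Subtype.ext (Prod.ext ?_ ?_)
    · change β = γ
      rw [e1, e2, hij]
    · exact hiz.symm.trans ((congrArg _ hij).trans hjw)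

theorem countable_of_isCompact_duplicateQuotient (hb : ∀ y, {i | b i ≤ y}.Countable)
    {C : Set (DuplicateQuotient b)} (hC : IsCompact C) : C.Countable := by
  let T : Set I := {i | (i : OnePoint I) ∈ C}
  have hfin : ∀ n, ((fun i => b i n) '' T).Finite := fun n => by
    obtain ⟨S, hST, hS⟩ := exists_subset_bijOn T fun i => b i n
    have hcl := isClosed_image_of_injOn b hS.injOn
    have hSC : ((fun i : I => (i : OnePoint I)) '' S : Set (DuplicateQuotient b)) ⊆ C := by
      rintro _ ⟨i, hi, rfl⟩
      exact hST hi
    have hfinite := (hC.of_isClosed_subset hcl hSC).finite <| by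
      refine ⟨discreteTopology_iff_isOpen_singleton.mpr ?_⟩
      rintro ⟨_, i, hi, rfl⟩
      convert (isOpen_singleton_coe_duplicateQuotient b i).preimage continuous_subtype_val
      ext
      exact Subtype.ext_iff
    rw [← hS.image_eq]
    exact (hfinite.of_finite_image OnePoint.coe_injective.injOn).image _
  choose y hy using fun n => (hfin n).bddAbove
  have hT : T.Countable := (hb y).mono fun i hi n => hy n (mem_image_of_mem _ hi)
  refine ((hT.image fun i : I => (i : OnePoint I)).insert OnePoint.infty).mono fun x hx => ?_
  induction x using OnePoint.rec with
  | infty => exact mem_insert _ _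
  | coe i => exact mem_insert_of_mem _ ⟨i, hx, rfl⟩

end Construction

theorem stmt11 :
    Cardinal.aleph 1 < boundingNumber ↔
      ∀ (X : Type u) (_ : TopologicalSpace X), T2Space X → IsKAnalytic X →
        (∃! x : X, ¬ IsOpen ({x} : Set X)) →
        (∀ K : Set X, IsCompact K → K.Countable) → Countable X := by
  refine ⟨fun h X _ _ hX _ hc => countable_of_compact_countable h hX hc, fun h => ?_⟩
  by_contra! hle
  obtain ⟨I, b, _, hb⟩ := exists_family_of_boundingNumber_le hle
  let _ : TopologicalSpace I := ⊥
  have : DiscreteTopology I := ⟨rfl⟩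
  have hiff : ∀ x : DuplicateQuotient b, IsOpen ({ULift.up.{u} x} : Set _) ↔ IsOpen {x} := by
    intro x
    rw [← Homeomorph.ulift.{u}.isOpen_image, image_singleton]
    rfl
  have hcount : Countable (ULift.{u} (DuplicateQuotient b)) := by
    refine h _ inferInstance Homeomorph.ulift.symm.t2Space
      (isKAnalytic_duplicateQuotient b) ⟨⟨OnePoint.infty⟩, ?_, ?_⟩ fun K hK => ?_
    · exact (hiff _).not.mpr (not_isOpen_singleton_infty_duplicateQuotient b)
    · rintro ⟨x⟩ hx
      induction x using OnePoint.rec with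
      | infty => rfl
      | coe i => exact (hx ((hiff _).mpr (isOpen_singleton_coe_duplicateQuotient b i))).elim
    · refine countable_of_injective_of_countable_image ULift.down_injective.injOn
        (countable_of_isCompact_duplicateQuotient b hb (hK.image continuous_uliftDown))
  have hI : Function.Injective fun i : I =>
      (⟨(i : OnePoint I)⟩ : ULift.{u} (DuplicateQuotient b)) := fun i j hij =>
    OnePoint.coe_injective (congrArg ULift.down hij)
  exact not_countable hI.countable
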